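/- For each (r−1)-slim partition μ ∈ π_n choose a symmetric polynomial g_μ with highest partition μ, and for each partition λ ∈ π_n choose a symmetric polynomial f_λ with highest partition λ. Then the set {g_μ · 𝓕(f_λ)}, where μ ranges over (r−1)-slim partitions in π_n and λ over all partitions in π_n, is a ℂ-basis of the ring ℂ[x_1,…,x_n]^{S_n} of symmetric polynomials. In particular, ℂ[x_1,…,x_n]^{S_n} is a free module of rank (r−1)^n over the image of the Frobenius homomorphism, with generators {g_μ}. -/

import Mathlib

open MvPolynomial

/-- `l` is an `(r-1)`-slim partition of length at most `n`:
consecutive differences are `< r-1` and the last part is `< r-1`. -/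
def IsSlim (r n : ℕ) (l : Fin n → ℕ) : Prop :=
  (∀ i : Fin n, ∀ h : (i : ℕ) + 1 < n, l i - l ⟨(i : ℕ) + 1, h⟩ < r - 1) ∧
  (∀ i : Fin n, (i : ℕ) = n - 1 → l i < r - 1)

/-- The monomial symmetric polynomial `m_λ`: the sum of the distinct monomials obtained
from `x^λ` by permuting the variables. -/
noncomputable def msym (n : ℕ) (l : Fin n → ℕ) : MvPolynomial (Fin n) ℂ :=
  ∑ a ∈ Finset.image (fun w : Equiv.Perm (Fin n) => l ∘ w) Finset.univ,
    MvPolynomial.monomial (Finsupp.equivFunOnFinite.symm a) (1 : ℂ)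

/-- Strict dominance order on partitions of equal weight:
`a < b` iff `a ≠ b`, `|a| = |b|` and all partial sums of `a` are at most those of `b`. -/
def DomLT (n : ℕ) (a b : Fin n → ℕ) : Prop :=
  a ≠ b ∧ (∑ i, a i = ∑ i, b i) ∧
  ∀ i : Fin n, ∑ j ∈ Finset.univ.filter (· ≤ i), a j
    ≤ ∑ j ∈ Finset.univ.filter (· ≤ i), b j

/-- `g` is a symmetric polynomial with highest partition `μ`:
`g = c_μ m_μ + Σ_{ν < μ} c_ν m_ν` with `c_μ ≠ 0` (`<` the dominance order). -/
def HighestPartition (n : ℕ) (g : MvPolynomial (Fin n) ℂ) (μ : Fin n → ℕ) : Prop :=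
  ∃ (S : Finset (Fin n → ℕ)) (coef : (Fin n → ℕ) → ℂ),
    μ ∈ S ∧ coef μ ≠ 0 ∧
    (∀ ν ∈ S, Antitone ν ∧ (ν = μ ∨ DomLT n ν μ)) ∧
    g = ∑ ν ∈ S, coef ν • msym n ν

/-- The Frobenius homomorphism `𝓕 : f(x_1,…,x_n) ↦ f(x_1^{r-1},…,x_n^{r-1})`. -/
noncomputable def Frob (r n : ℕ) (f : MvPolynomial (Fin n) ℂ) : MvPolynomial (Fin n) ℂ :=
  (MvPolynomial.aeval fun i : Fin n =>
    (MvPolynomial.X i : MvPolynomial (Fin n) ℂ) ^ (r - 1)) f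

/-!
The leading exponent of a symmetric polynomial in the lexicographic order is a partition, and
strict dominance implies strict lexicographic order, so a symmetric polynomial with highest
partition `μ` has leading exponent `μ`. Leading exponents add under multiplication and `𝓕`
multiplies them by `r - 1`, so `g_μ * 𝓕(f_λ)` has leading exponent `μ + (r - 1) λ`. Dividing the
successive differences of a partition by `r - 1` with remainder writes it in this form, with `μ`
slim, in exactly one way. Hence the leading exponents of the products run through each partition
exactly once, which gives linear independence and, by cancelling leading terms, spanning.
-/

section SupDegree

open AddMonoidAlgebra

variable {A B ι : Type*} [LinearOrder B] [OrderBot B] {D : A → B}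

theorem supDegree_smul {R : Type*} [Semiring R] [NoZeroDivisors R] {c : R} (hc : c ≠ 0)
    (p : AddMonoidAlgebra R A) : (c • p).supDegree D = p.supDegree D := by
  have hsupp : (c • p).coeff.support = p.coeff.support := by ext; simp [hc]
  rw [supDegree, supDegree, hsupp]

theorem leadingCoeff_smul {R : Type*} [Semiring R] [NoZeroDivisors R] [Nonempty A] (c : R)
    (p : AddMonoidAlgebra R A) : (c • p).leadingCoeff D = c * p.leadingCoeff D := by
  rcases eq_or_ne c 0 with rfl | hc
  · rw [zero_smul, leadingCoeff_zero, zero_mul]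
  · rw [leadingCoeff, supDegree_smul hc, AddMonoidAlgebra.coeff_smul, Finsupp.smul_apply,
      smul_eq_mul, leadingCoeff]

theorem linearIndependent_of_injective_supDegree {R : Type*} [Ring R] [NoZeroDivisors R]
    [AddZeroClass A] {b : ι → AddMonoidAlgebra R A} (hb : ∀ i, b i ≠ 0)
    (hinj : Function.Injective fun i => (b i).supDegree D) : LinearIndependent R b := by
  classical
  rw [linearIndependent_iff']
  intro s c hsum i hi
  by_contra hci
  have hsum_ne_zero : ∑ j ∈ s with c j ≠ 0, c j • b j ≠ 0 := by
    refine sum_ne_zero_of_injOn_supDegree (D := D) ⟨i, by simp [hi, hci]⟩ ?_ ?_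
    · exact fun j hj => smul_ne_zero (Finset.mem_filter.1 hj).2 (hb j)
    · intro j hj k hk hjk
      simp only [Function.comp_apply, supDegree_smul (Finset.mem_filter.1 hj).2,
        supDegree_smul (Finset.mem_filter.1 hk).2] at hjk
      exact hinj hjk
  refine hsum_ne_zero ((Finset.sum_filter_of_ne ?_).trans hsum)
  exact fun j _ hj => left_ne_zero_of_smul hj

theorem span_range_eq_of_forall_exists_supDegree_eq {K : Type*} [DivisionRing K] [AddZeroClass A]
    [WellFoundedLT B] (hD : D.Injective) {V : Submodule K (AddMonoidAlgebra K A)}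
    {b : ι → AddMonoidAlgebra K A} (hbV : ∀ i, b i ∈ V) (hb : ∀ i, b i ≠ 0)
    (hV : ∀ p ∈ V, p ≠ 0 → ∃ i, (b i).supDegree D = p.supDegree D) :
    Submodule.span K (Set.range b) = V := by
  refine le_antisymm (Submodule.span_le.2 (Set.range_subset_iff.2 hbV)) fun p hp => ?_
  induction hd : p.supDegree D using WellFoundedLT.induction generalizing p with | _ d ih
  subst hd
  rcases eq_or_ne p 0 with rfl | hp0
  · exact zero_mem _
  obtain ⟨i, hi⟩ := hV p hp hp0
  have hlc_b : (b i).leadingCoeff D ≠ 0 := (leadingCoeff_ne_zero hD).2 (hb i)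
  have hlc_p : p.leadingCoeff D ≠ 0 := (leadingCoeff_ne_zero hD).2 hp0
  set c := p.leadingCoeff D / (b i).leadingCoeff D
  have hdeg : p.supDegree D = (c • b i).supDegree D := by
    rw [supDegree_smul (div_ne_zero hlc_p hlc_b), hi]
  have hlc : p.leadingCoeff D = (c • b i).leadingCoeff D := by
    rw [leadingCoeff_smul, div_mul_cancel₀ _ hlc_b]
  have hcb : c • b i ∈ Submodule.span K (Set.range b) :=
    Submodule.smul_mem _ c (Submodule.subset_span ⟨i, rfl⟩)
  rcases supDegree_sub_lt_of_leadingCoeff_eq hD hdeg hlc with hlt | heq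
  · have hsub := ih _ hlt (p - c • b i) (sub_mem hp (V.smul_mem c (hbV i))) rfl
    exact (Submodule.sub_mem_iff_left _ hcb).1 hsub
  · exact heq ▸ hcb

end SupDegree

theorem isSymmetric_expand {σ R : Type*} [CommSemiring R] {p : MvPolynomial σ R}
    (hp : p.IsSymmetric) (k : ℕ) : (expand k p).IsSymmetric := fun w => by
  rw [rename_expand, hp w]

section LeadingExponent

open AddMonoidAlgebra

variable {σ R : Type*} [LinearOrder σ] [CommSemiring R]

/-- The exponent of the leading monomial of `p` for the lexicographic order, as a plain function so
that it can be compared with partitions. It is `0` for `p = 0`. -/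
noncomputable def leadingExponent (p : MvPolynomial σ R) : σ → ℕ :=
  ⇑(ofLex (p.supDegree toLex))

theorem leadingExponent_eq_iff {p q : MvPolynomial σ R} :
    leadingExponent p = leadingExponent q ↔ supDegree toLex p = supDegree toLex q := by
  rw [leadingExponent, leadingExponent, DFunLike.coe_fn_eq, ofLex_inj]

theorem supDegree_lt_supDegree_iff {p q : MvPolynomial σ R} :
    supDegree toLex p < supDegree toLex q ↔
      toLex (leadingExponent p) < toLex (leadingExponent q) :=
  Iff.rfl

theorem leadingExponent_mul [NoZeroDivisors R] {p q : MvPolynomial σ R} (hp : p ≠ 0)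
    (hq : q ≠ 0) : leadingExponent (p * q) = leadingExponent p + leadingExponent q := by
  have hlc : leadingCoeff toLex p * leadingCoeff toLex q ≠ 0 :=
    mul_ne_zero ((leadingCoeff_ne_zero toLex.injective).2 hp)
      ((leadingCoeff_ne_zero toLex.injective).2 hq)
  rw [leadingExponent, supDegree_mul toLex.injective toLex_add hlc hp hq, ofLex_add,
    Finsupp.coe_add, leadingExponent, leadingExponent]

theorem supDegree_toLex_expand {k : ℕ} (hk : k ≠ 0) (p : MvPolynomial σ R) :
    supDegree toLex (expand k p) = k • supDegree toLex p := by
  have hsupp : (expand k p).support = p.support.image (k • ·) := support_expand p hk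
  calc (expand k p).support.sup toLex
      = p.support.sup (fun e => k • toLex e) := by rw [hsupp, Finset.sup_image]; rfl
    _ = k • p.support.sup toLex :=
        (Finset.apply_sup_eq_sup_comp_of_linearOrder (k • ·)
          (fun _ _ h => nsmul_le_nsmul_right h k) (smul_zero k)).symm

theorem leadingExponent_expand {k : ℕ} (hk : k ≠ 0) (p : MvPolynomial σ R) :
    leadingExponent (expand k p) = k • leadingExponent p := by
  rw [leadingExponent, supDegree_toLex_expand hk]
  rfl

end LeadingExponent

section LeadingExponentBasis

variable {σ ι : Type*} [LinearOrder σ]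

theorem linearIndependent_of_injective_leadingExponent {R : Type*} [CommRing R]
    [NoZeroDivisors R] {b : ι → MvPolynomial σ R} (hb : ∀ i, b i ≠ 0)
    (hinj : Function.Injective fun i => leadingExponent (b i)) : LinearIndependent R b :=
  linearIndependent_of_injective_supDegree (D := toLex) hb fun _ _ h =>
    hinj (leadingExponent_eq_iff.2 h)

theorem span_range_eq_symmetricSubalgebra {K : Type*} [Field K] [Finite σ]
    {b : ι → MvPolynomial σ K} (hsymm : ∀ i, (b i).IsSymmetric) (hb : ∀ i, b i ≠ 0)
    (hsurj : ∀ a : σ → ℕ, Antitone a → ∃ i, leadingExponent (b i) = a) :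
    Submodule.span K (Set.range b) = (symmetricSubalgebra σ K).toSubmodule := by
  refine span_range_eq_of_forall_exists_supDegree_eq toLex.injective hsymm hb fun p hp _ => ?_
  obtain ⟨i, hi⟩ := hsurj (leadingExponent p) (IsSymmetric.antitone_supDegree hp)
  exact ⟨i, leadingExponent_eq_iff.1 hi⟩

end LeadingExponentBasis

section MonomialSymmetric

open AddMonoidAlgebra (supDegree leadingCoeff)

variable {n : ℕ}

theorem toLex_lt_toLex_of_domLT {μ ν : Fin n → ℕ} (h : DomLT n ν μ) : toLex ν < toLex μ := by
  obtain ⟨hne, -, hdom⟩ := h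
  refine (not_lt.1 fun hlt => ?_).lt_of_ne (toLex.injective.ne hne)
  obtain ⟨i, heq, hi⟩ := hlt
  refine (hdom i).not_gt (Finset.sum_lt_sum (fun j hj => ?_) ⟨i, by simp, hi⟩)
  rcases (Finset.mem_filter.1 hj).2.lt_or_eq with hji | rfl
  · exact (heq j hji).le
  · exact hi.le

theorem isSymmetric_msym (l : Fin n → ℕ) : (msym n l).IsSymmetric := by
  intro w
  rw [msym, map_sum]
  refine Finset.sum_equiv (w.arrowCongr (.refl ℕ)) (fun a => ?_) fun a _ => ?_
  · simp only [Finset.mem_image, Finset.mem_univ, true_and]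
    refine (Equiv.mulRight w.symm).exists_congr fun v => ?_
    exact (w.symm.surjective.injective_comp_right.eq_iff (a := l ∘ v) (b := a)).symm
  · have hmap : (Finsupp.equivFunOnFinite.symm a).mapDomain w =
        Finsupp.equivFunOnFinite.symm (a ∘ w.symm) := by
      ext i
      simp [Finsupp.mapDomain_equiv_apply]
    rw [rename_monomial, hmap]
    rfl

theorem mem_support_msym {l : Fin n → ℕ} {e : Fin n →₀ ℕ} :
    e ∈ (msym n l).support ↔ ∃ w : Equiv.Perm (Fin n), l ∘ w = e := by
  classical
  have hcoe (a : Fin n → ℕ) : Finsupp.equivFunOnFinite.symm a = e ↔ a = ⇑e :=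
    Equiv.symm_apply_eq _
  simp [msym, coeff_sum, coeff_monomial, hcoe]

theorem msym_ne_zero (l : Fin n → ℕ) : msym n l ≠ 0 := by
  rw [← support_nonempty]
  exact ⟨Finsupp.equivFunOnFinite.symm l, mem_support_msym.2 ⟨1, rfl⟩⟩

theorem leadingExponent_msym {l : Fin n → ℕ} (hl : Antitone l) :
    leadingExponent (msym n l) = l := by
  obtain ⟨e, he, hdeg⟩ := AddMonoidAlgebra.exists_supDegree_mem_support toLex (msym_ne_zero l)
  obtain ⟨w, hw⟩ := mem_support_msym.1 he
  have hlw : leadingExponent (msym n l) = l ∘ w := by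
    rw [leadingExponent, hdeg, ofLex_toLex, hw]
  have hanti : Antitone (l ∘ w) := hlw ▸ (isSymmetric_msym l).antitone_supDegree
  exact hlw.trans (Tuple.unique_antitone (τ := 1) hanti hl)

namespace HighestPartition

variable {p : MvPolynomial (Fin n) ℂ} {μ : Fin n → ℕ}

theorem isSymmetric (h : HighestPartition n p μ) : p.IsSymmetric := by
  obtain ⟨S, c, -, -, -, rfl⟩ := h
  exact (symmetricSubalgebra (Fin n) ℂ).sum_mem fun ν _ => (isSymmetric_msym ν).smul (c ν)

theorem supDegree_eq_and_leadingCoeff_ne_zero (h : HighestPartition n p μ) :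
    supDegree toLex p = supDegree toLex (msym n μ) ∧ leadingCoeff toLex p ≠ 0 := by
  obtain ⟨S, c, hμS, hcμ, hS, rfl⟩ := h
  have hlt : ∀ ν ∈ S, ν ≠ μ → supDegree toLex (c ν • msym n ν) <
      supDegree toLex (c μ • msym n μ) := by
    intro ν hν hne
    have hdom : DomLT n ν μ := (hS ν hν).2.resolve_left hne
    rw [supDegree_smul hcμ]
    calc supDegree toLex (c ν • msym n ν)
        ≤ supDegree toLex (msym n ν) := Finset.sup_mono support_smul
      _ < supDegree toLex (msym n μ) := by
        rw [supDegree_lt_supDegree_iff, leadingExponent_msym (hS ν hν).1,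
          leadingExponent_msym (hS μ hμS).1]
        exact toLex_lt_toLex_of_domLT hdom
  obtain ⟨hdeg, hlc⟩ := AddMonoidAlgebra.supDegree_leadingCoeff_sum_eq hμS hlt
  rw [hdeg, hlc, supDegree_smul hcμ, leadingCoeff_smul]
  exact ⟨rfl, mul_ne_zero hcμ
    ((AddMonoidAlgebra.leadingCoeff_ne_zero toLex.injective).2 (msym_ne_zero μ))⟩

theorem antitone (h : HighestPartition n p μ) : Antitone μ := by
  obtain ⟨S, -, hμS, -, hS, -⟩ := h
  exact (hS μ hμS).1

theorem ne_zero (h : HighestPartition n p μ) : p ≠ 0 :=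
  (AddMonoidAlgebra.leadingCoeff_ne_zero toLex.injective).1
    h.supDegree_eq_and_leadingCoeff_ne_zero.2

theorem leadingExponent_eq (h : HighestPartition n p μ) : leadingExponent p = μ :=
  (leadingExponent_eq_iff.2 h.supDegree_eq_and_leadingCoeff_ne_zero.1).trans
    (leadingExponent_msym h.antitone)

end HighestPartition

end MonomialSymmetric

section Slim

open Fin

variable {n : ℕ}

theorem antitone_accumulate (t : Fin n → ℕ) : Antitone (accumulate n n t) := by
  intro i j hij
  simp only [accumulate_apply]
  exact Finset.sum_le_sum_of_subset (Finset.monotone_filter_right _ fun _ _ h => hij.trans h)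

theorem exists_accumulate_eq {l : Fin n → ℕ} (hl : Antitone l) : ∃ t, accumulate n n t = l :=
  ⟨_, accumulate_invAccumulate le_rfl hl⟩

theorem isSlim_accumulate_iff {r : ℕ} {t : Fin n → ℕ} :
    IsSlim r n (accumulate n n t) ↔ ∀ i, t i < r - 1 := by
  have hgap : ∀ (i : Fin n) (h : (i : ℕ) + 1 < n),
      accumulate n n t i - accumulate n n t ⟨i + 1, h⟩ = t i := fun i h => by
    rw [accumulate_rec i.2 h, Nat.add_sub_cancel_right]
  have hlast : ∀ i : Fin n, (i : ℕ) = n - 1 → accumulate n n t i = t i := fun i h =>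
    accumulate_last i.2 (by lia) t (by lia)
  constructor
  · rintro ⟨hlt, hlast_lt⟩ i
    by_cases h : (i : ℕ) + 1 < n
    · exact hgap i h ▸ hlt i h
    · have hi : (i : ℕ) = n - 1 := by lia
      exact hlast i hi ▸ hlast_lt i hi
  · exact fun ht => ⟨fun i h => (hgap i h).trans_lt (ht i), fun i h => (hlast i h).trans_lt (ht i)⟩

theorem injective_slim_add_smul (r : ℕ) :
    Function.Injective fun p : {l : Fin n → ℕ // Antitone l ∧ IsSlim r n l} ×
      {l : Fin n → ℕ // Antitone l} => p.1.1 + (r - 1) • p.2.1 := by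
  rintro ⟨⟨μ, hμ, hμs⟩, ⟨l, hl⟩⟩ ⟨⟨μ', hμ', hμs'⟩, ⟨l', hl'⟩⟩ heq
  obtain ⟨s, rfl⟩ := exists_accumulate_eq hμ
  obtain ⟨t, rfl⟩ := exists_accumulate_eq hl
  obtain ⟨s', rfl⟩ := exists_accumulate_eq hμ'
  obtain ⟨t', rfl⟩ := exists_accumulate_eq hl'
  rw [isSlim_accumulate_iff] at hμs hμs'
  simp only [← map_nsmul, ← map_add] at heq
  have hst : ∀ i, s i + (r - 1) * t i = s' i + (r - 1) * t' i :=
    congrFun (accumulate_injective le_rfl heq)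
  have hdivmod (i : Fin n) :=
    (Nat.div_mod_unique (Nat.zero_lt_of_lt (hμs i))).2 ⟨hst i, hμs i⟩
  have hdivmod' (i : Fin n) :=
    (Nat.div_mod_unique (Nat.zero_lt_of_lt (hμs' i))).2 ⟨Eq.refl (s' i + (r - 1) * t' i), hμs' i⟩
  obtain rfl : s = s' := funext fun i => (hdivmod i).2.symm.trans (hdivmod' i).2
  obtain rfl : t = t' := funext fun i => (hdivmod i).1.symm.trans (hdivmod' i).1
  rfl

theorem exists_slim_add_smul_eq {r : ℕ} (hr : 2 ≤ r) {a : Fin n → ℕ} (ha : Antitone a) :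
    ∃ μ l : Fin n → ℕ, (Antitone μ ∧ IsSlim r n μ) ∧ Antitone l ∧ μ + (r - 1) • l = a := by
  obtain ⟨t, rfl⟩ := exists_accumulate_eq ha
  refine ⟨accumulate n n fun i => t i % (r - 1), accumulate n n fun i => t i / (r - 1),
    ⟨antitone_accumulate _, isSlim_accumulate_iff.2 fun i => Nat.mod_lt _ (by lia)⟩,
    antitone_accumulate _, ?_⟩
  rw [← map_nsmul, ← map_add]
  exact congrArg _ (funext fun i => Nat.mod_add_div (t i) (r - 1))

end Slim

/-- choosing, for each `(r-1)`-slim `μ ∈ π_n`, a symmetric polynomial `g_μ`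
with highest partition `μ` and, for each `λ ∈ π_n`, a symmetric polynomial `f_λ` with
highest partition `λ`, the products `g_μ · 𝓕(f_λ)` form a `ℂ`-basis of the ring of
symmetric polynomials `ℂ[x_1,…,x_n]^{S_n}`. -/
theorem slim_times_frobenius_basis_of_symmetric_polynomials
    (r n : ℕ) (hr : 2 ≤ r) (hn : 1 ≤ n)
    (g : {l : Fin n → ℕ // Antitone l ∧ IsSlim r n l} → MvPolynomial (Fin n) ℂ)
    (hg : ∀ μ, HighestPartition n (g μ) μ.1)
    (f : {l : Fin n → ℕ // Antitone l} → MvPolynomial (Fin n) ℂ)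
    (hf : ∀ l, HighestPartition n (f l) l.1) :
    LinearIndependent ℂ
      (fun p : {l : Fin n → ℕ // Antitone l ∧ IsSlim r n l} ×
          {l : Fin n → ℕ // Antitone l} => g p.1 * Frob r n (f p.2)) ∧
    Submodule.span ℂ
      (Set.range fun p : {l : Fin n → ℕ // Antitone l ∧ IsSlim r n l} ×
          {l : Fin n → ℕ // Antitone l} => g p.1 * Frob r n (f p.2)) =
      Submodule.span ℂ {h : MvPolynomial (Fin n) ℂ | h.IsSymmetric} := by
  have hr' : r - 1 ≠ 0 := by lia
  have hF (l) : Frob r n (f l) = expand (r - 1) (f l) := rfl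
  have hFne (l) : expand (r - 1) (f l) ≠ 0 := (expand_ne_zero (by lia)).2 (hf l).ne_zero
  simp only [hF]
  set b := fun p : {l : Fin n → ℕ // Antitone l ∧ IsSlim r n l} × {l : Fin n → ℕ // Antitone l} =>
    g p.1 * expand (r - 1) (f p.2)
  have hb (p) : b p ≠ 0 := mul_ne_zero (hg p.1).ne_zero (hFne p.2)
  have hsymm (p) : (b p).IsSymmetric :=
    (hg p.1).isSymmetric.mul (isSymmetric_expand (hf p.2).isSymmetric _)
  have hlead (p) : leadingExponent (b p) = p.1.1 + (r - 1) • p.2.1 := by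
    rw [leadingExponent_mul (hg p.1).ne_zero (hFne p.2), leadingExponent_expand hr',
      (hg p.1).leadingExponent_eq, (hf p.2).leadingExponent_eq]
  constructor
  · refine linearIndependent_of_injective_leadingExponent hb ?_
    simpa only [hlead] using injective_slim_add_smul r
  · refine (span_range_eq_symmetricSubalgebra hsymm hb fun a ha => ?_).trans
      (Submodule.span_eq (symmetricSubalgebra (Fin n) ℂ).toSubmodule).symm
    obtain ⟨μ, l, hμ, hl, rfl⟩ := exists_slim_add_smul_eq hr ha
    exact ⟨(⟨μ, hμ⟩, ⟨l, hl⟩), hlead _⟩
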